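/- Let μ ∈ ℝ, σ > 0, and c > 0. Let f be the density of the square of a N(μ, σ²) Gaussian random variable, i.e., f(x) = [exp(−(x+μ²)/(2σ²)) / (2√(2πσ²x))] · [exp(μ√x/σ²) + exp(−μ√x/σ²)] for x > 0 and f(x) = 0 otherwise. Then ∫₀^∞ f(x) · Q(√(c·x/2)) dx = (1/π) ∫₀^{π/2} √(2 sin²θ / (2 sin²θ + c·σ²)) · exp(−c·μ² / (4 sin²θ + 2c·σ²)) dθ, where Q(x) = ∫_x^∞ (1/√(2π)) e^{−t²/2} dt is the Gaussian Q-function. -/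

import Mathlib

open MeasureTheory Real

/-- The Gaussian Q-function `Q(x) = ∫ₓ^∞ (1/√(2π)) e^{−t²/2} dt`. -/
noncomputable def gaussQ (x : ℝ) : ℝ :=
  ∫ t in Set.Ioi x, (1 / Real.sqrt (2 * π)) * Real.exp (-t ^ 2 / 2)

/-- The density of the square of a `N(μ, σ²)` Gaussian random variable. -/
noncomputable def squaredGaussianPDF (μ σ : ℝ) (x : ℝ) : ℝ :=
  if 0 < x then
    Real.exp (-(x + μ ^ 2) / (2 * σ ^ 2)) / (2 * Real.sqrt (2 * π * σ ^ 2 * x)) *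
      (Real.exp (μ * Real.sqrt x / σ ^ 2) + Real.exp (-(μ * Real.sqrt x) / σ ^ 2))
  else 0

lemma aux_inner (t : ℝ) (ht : 0 < t) :
    ∫ u in Set.Ioi (0:ℝ), t * exp (-(t ^ 2 / 2)) * exp (-(t ^ 2 / 2) * u ^ 2) =
      π * ((1 / √(2 * π)) * exp (-t ^ 2 / 2)) := by
  rw [integral_const_mul, integral_gaussian_Ioi]
  have h1 : √(π / (t ^ 2 / 2)) = √(2 * π) / t := by
    rw [show π / (t ^ 2 / 2) = (2 * π) / t ^ 2 by field_simp, sqrt_div (by positivity),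
      sqrt_sq ht.le]
  have h2 : √(2 * π) * √(2 * π) = 2 * π := mul_self_sqrt (by positivity)
  have h3 : 0 < √(2 * π) := by positivity
  rw [h1, show -(t ^ 2 / 2) = -t ^ 2 / 2 by ring]
  field_simp
  linarith

lemma aux_outer (x u : ℝ) :
    ∫ t in Set.Ioi x, t * exp (-(t ^ 2 / 2)) * exp (-(t ^ 2 / 2) * u ^ 2) =
      (1 + u ^ 2)⁻¹ * exp (-(x ^ 2 * (1 + u ^ 2) / 2)) := by
  have hu : 0 < 1 + u ^ 2 := by positivity
  have e : ∀ t : ℝ, t * exp (-(t ^ 2 / 2)) * exp (-(t ^ 2 / 2) * u ^ 2) =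
      t * exp (-((1 + u ^ 2) / 2) * t ^ 2) := by
    intro t
    rw [mul_assoc, ← exp_add]
    congr 2
    ring
  simp_rw [e]
  have hI := integrable_mul_exp_neg_mul_sq (b := (1 + u ^ 2) / 2) (by positivity)
  have hd : ∀ t ∈ Set.Ici x, HasDerivAt
      (fun t : ℝ => -(1 + u ^ 2)⁻¹ * exp (-((1 + u ^ 2) / 2) * t ^ 2))
      (t * exp (-((1 + u ^ 2) / 2) * t ^ 2)) t := by
    intro t _
    have := (((hasDerivAt_pow 2 t).const_mul (-((1 + u ^ 2) / 2))).exp).const_mul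
      (-(1 + u ^ 2)⁻¹)
    refine this.congr_deriv ?_
    simp only [Nat.cast_ofNat, Nat.add_one_sub_one, pow_one]
    field_simp
  have hl : Filter.Tendsto (fun t : ℝ => -(1 + u ^ 2)⁻¹ * exp (-((1 + u ^ 2) / 2) * t ^ 2))
      Filter.atTop (nhds 0) := by
    suffices h : Filter.Tendsto (fun t : ℝ => -((1 + u ^ 2) / 2) * t ^ 2) Filter.atTop
        Filter.atBot by
      simpa using (tendsto_exp_atBot.comp h).const_mul (-(1 + u ^ 2)⁻¹)
    refine Filter.Tendsto.const_mul_atTop_of_neg (by linarith) ?_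
    exact Filter.tendsto_pow_atTop two_ne_zero
  rw [integral_Ioi_of_hasDerivAt_of_tendsto' hd hI.integrableOn hl]
  rw [show -((1 + u ^ 2) / 2) * x ^ 2 = -(x ^ 2 * (1 + u ^ 2) / 2) by ring]
  ring

/-- Craig's formula in the variable `u = cot θ`. -/
lemma craig (x : ℝ) (hx : 0 < x) :
    π * gaussQ x =
      ∫ u in Set.Ioi (0:ℝ), (1 + u ^ 2)⁻¹ * exp (-(x ^ 2 * (1 + u ^ 2) / 2)) := by
  unfold gaussQ
  simp_rw [← aux_outer]
  rw [← integral_const_mul]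
  rw [← integral_integral_swap (μ := volume.restrict (Set.Ioi x))
    (ν := volume.restrict (Set.Ioi (0:ℝ)))
    (f := fun t u : ℝ => t * exp (-(t ^ 2 / 2)) * exp (-(t ^ 2 / 2) * u ^ 2))]
  · refine setIntegral_congr_fun measurableSet_Ioi fun t ht => ?_
    exact (aux_inner t (hx.trans ht)).symm
  · have h1 : Integrable (fun t : ℝ => t * exp (-(1 / 2) * t ^ 2))
        (volume.restrict (Set.Ioi x)) :=
      (integrable_mul_exp_neg_mul_sq (by norm_num)).integrableOn
    have h2 : Integrable (fun u : ℝ => exp (-(x ^ 2 / 2) * u ^ 2))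
        (volume.restrict (Set.Ioi (0:ℝ))) :=
      (integrable_exp_neg_mul_sq (by positivity)).integrableOn
    refine (h1.mul_prod h2).mono' ?_ ?_
    · apply Continuous.aestronglyMeasurable
      unfold Function.uncurry
      fun_prop
    · rw [Measure.prod_restrict]
      filter_upwards [ae_restrict_mem (measurableSet_Ioi.prod measurableSet_Ioi)] with z hz
      have hz1 : x < z.1 := hz.1
      have h0 : 0 < z.1 := hx.trans hz1
      simp only [Function.uncurry]
      rw [norm_of_nonneg (by positivity), show -(z.1 ^ 2 / 2) = -(1 / 2) * z.1 ^ 2 by ring]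
      gcongr ?_ * exp ?_
      have : x ^ 2 ≤ z.1 ^ 2 := by gcongr
      nlinarith [sq_nonneg z.2]

lemma integral_fold (F : ℝ → ℝ) (hF : Integrable F) :
    ∫ y in Set.Ioi (0:ℝ), (F y + F (-y)) = ∫ y, F y := by
  rw [integral_add hF.integrableOn hF.comp_neg.integrableOn, integral_comp_neg_Ioi, neg_zero,
    add_comm]
  exact intervalIntegral.integral_Iic_add_Ioi hF.integrableOn hF.integrableOn

/-- Gaussian density. -/
noncomputable def gd (μ σ y : ℝ) : ℝ := exp (-(y - μ) ^ 2 / (2 * σ ^ 2)) / √(2 * π * σ ^ 2)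

lemma gd_mul (μ σ b : ℝ) (hσ : 0 < σ) (hb : 0 ≤ b) (y : ℝ) :
    gd μ σ y * exp (-b * y ^ 2) =
      exp (-(b * μ ^ 2) / (1 + 2 * σ ^ 2 * b)) / √(2 * π * σ ^ 2) *
        exp (-((1 + 2 * σ ^ 2 * b) / (2 * σ ^ 2)) * (y - μ / (1 + 2 * σ ^ 2 * b)) ^ 2) := by
  unfold gd
  rw [div_mul_eq_mul_div, div_mul_eq_mul_div, ← exp_add, ← exp_add]
  have : 0 < 1 + 2 * σ ^ 2 * b := by positivity
  congr 2
  field_simp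
  ring

lemma gd_mul_integrable (μ σ b : ℝ) (hσ : 0 < σ) (hb : 0 ≤ b) :
    Integrable (fun y => gd μ σ y * exp (-b * y ^ 2)) := by
  simp_rw [gd_mul μ σ b hσ hb]
  have h := integrable_exp_neg_mul_sq (b := (1 + 2 * σ ^ 2 * b) / (2 * σ ^ 2)) (by positivity)
  exact (h.comp_sub_right (μ / (1 + 2 * σ ^ 2 * b))).const_mul _

lemma gd_integrable (μ σ : ℝ) (hσ : 0 < σ) : Integrable (gd μ σ) := by
  simpa using gd_mul_integrable μ σ 0 hσ le_rfl

lemma gd_mul_integral (μ σ b : ℝ) (hσ : 0 < σ) (hb : 0 ≤ b) :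
    ∫ y, gd μ σ y * exp (-b * y ^ 2) =
      √(1 / (1 + 2 * σ ^ 2 * b)) * exp (-(b * μ ^ 2) / (1 + 2 * σ ^ 2 * b)) := by
  simp_rw [gd_mul μ σ b hσ hb]
  rw [integral_const_mul, integral_sub_right_eq_self
    (fun y => exp (-((1 + 2 * σ ^ 2 * b) / (2 * σ ^ 2)) * y ^ 2)), integral_gaussian]
  have h0 : 0 < 1 + 2 * σ ^ 2 * b := by positivity
  rw [show π / ((1 + 2 * σ ^ 2 * b) / (2 * σ ^ 2)) =
    (2 * π * σ ^ 2) * (1 / (1 + 2 * σ ^ 2 * b)) by field_simp, sqrt_mul (x := 2 * π * σ ^ 2) (by positivity)]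
  have : 0 < √(2 * π * σ ^ 2) := by positivity
  generalize √(2 * π * σ ^ 2) = r at *
  field_simp

lemma pdf_sq (μ σ y : ℝ) (hσ : 0 < σ) (hy : 0 < y) :
    2 * y * squaredGaussianPDF μ σ (y ^ 2) = gd μ σ y + gd μ σ (-y) := by
  unfold squaredGaussianPDF gd
  rw [if_pos (by positivity), sqrt_sq hy.le, sqrt_mul (by positivity), sqrt_sq hy.le]
  have : 0 < √(2 * π * σ ^ 2) := by positivity
  have e1 : exp (-(y - μ) ^ 2 / (2 * σ ^ 2)) =
      exp (-(y ^ 2 + μ ^ 2) / (2 * σ ^ 2)) * exp (μ * y / σ ^ 2) := by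
    rw [← exp_add]; congr 1; field_simp; ring
  have e2 : exp (-(-y - μ) ^ 2 / (2 * σ ^ 2)) =
      exp (-(y ^ 2 + μ ^ 2) / (2 * σ ^ 2)) * exp (-(μ * y) / σ ^ 2) := by
    rw [← exp_add]; congr 1; field_simp; ring
  rw [e1, e2]
  field_simp

lemma arctan_subst (h : ℝ → ℝ) :
    ∫ θ in (0:ℝ)..(π / 2), h (sin θ ^ 2) =
      ∫ u in Set.Ioi (0:ℝ), (1 + u ^ 2)⁻¹ * h ((1 + u ^ 2)⁻¹) := by
  have h1 : ∫ θ in (0:ℝ)..(π / 2), h (sin θ ^ 2) = ∫ θ in (0:ℝ)..(π / 2), h (cos θ ^ 2) := by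
    have := intervalIntegral.integral_comp_sub_left (a := 0) (b := π / 2)
      (fun θ => h (sin θ ^ 2)) (π / 2)
    simpa [sin_pi_div_two_sub] using this.symm
  have h2 : arctan '' Set.Ioi 0 = Set.Ioo 0 (π / 2) := by
    ext θ
    constructor
    · rintro ⟨u, hu, rfl⟩
      exact ⟨arctan_pos.2 hu, arctan_lt_pi_div_two u⟩
    · rintro ⟨ha, hb⟩
      exact ⟨tan θ, tan_pos_of_pos_of_lt_pi_div_two ha hb, arctan_tan (by linarith) hb⟩
  rw [h1, intervalIntegral.integral_of_le (by positivity), integral_Ioc_eq_integral_Ioo, ← h2,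
    integral_image_eq_integral_abs_deriv_smul measurableSet_Ioi
      (fun u _ => (hasDerivAt_arctan u).hasDerivWithinAt) arctan_injective.injOn]
  refine setIntegral_congr_fun measurableSet_Ioi fun u _ => ?_
  have : 0 < 1 + u ^ 2 := by positivity
  simp only [cos_sq_arctan, smul_eq_mul, one_div]
  rw [abs_of_pos (by positivity)]

theorem upep_integral_correct_antenna_detection (μ σ c : ℝ) (hσ : 0 < σ) (hc : 0 < c) :
    ∫ x in Set.Ioi (0:ℝ), squaredGaussianPDF μ σ x * gaussQ (Real.sqrt (c * x / 2)) =
      (1 / π) * ∫ θ in (0:ℝ)..(π / 2),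
        Real.sqrt (2 * Real.sin θ ^ 2 / (2 * Real.sin θ ^ 2 + c * σ ^ 2)) *
          Real.exp (-(c * μ ^ 2) / (4 * Real.sin θ ^ 2 + 2 * c * σ ^ 2)) := by
  rw [arctan_subst (fun w => √(2 * w / (2 * w + c * σ ^ 2)) *
    exp (-(c * μ ^ 2) / (4 * w + 2 * c * σ ^ 2)))]
  rw [← integral_comp_rpow_Ioi_of_pos (p := 2) two_pos]
  have step1 : ∫ y in Set.Ioi (0:ℝ), (2 * y ^ ((2:ℝ) - 1)) •
      (squaredGaussianPDF μ σ (y ^ (2:ℝ)) * gaussQ (√(c * y ^ (2:ℝ) / 2))) =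
      ∫ y in Set.Ioi (0:ℝ), (1 / π) * ∫ u in Set.Ioi (0:ℝ), (gd μ σ y + gd μ σ (-y)) *
        ((1 + u ^ 2)⁻¹ * exp (-(c * (1 + u ^ 2) / 4) * y ^ 2)) := by
    refine setIntegral_congr_fun measurableSet_Ioi fun y hy => ?_
    have hy : 0 < y := hy
    have hq := craig (√(c * y ^ 2 / 2)) (by positivity)
    simp only [smul_eq_mul]
    rw [show (2:ℝ) - 1 = 1 by norm_num, rpow_one, rpow_two, ← mul_assoc, pdf_sq μ σ y hσ hy,
      integral_const_mul]
    rw [sq_sqrt (by positivity)] at hq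
    have e : ∀ u : ℝ, -(c * (1 + u ^ 2) / 4) * y ^ 2 = -(c * y ^ 2 / 2 * (1 + u ^ 2) / 2) := by
      intro u; ring
    simp_rw [e]
    rw [← hq]
    field_simp
  rw [step1, integral_const_mul]
  congr 1
  have hG := gd_integrable μ σ hσ
  rw [integral_integral_swap]
  · refine setIntegral_congr_fun measurableSet_Ioi fun u _ => ?_
    have hu : 0 < 1 + u ^ 2 := by positivity
    have hb : 0 ≤ c * (1 + u ^ 2) / 4 := by positivity
    have e : ∀ y : ℝ, (gd μ σ y + gd μ σ (-y)) *
        ((1 + u ^ 2)⁻¹ * exp (-(c * (1 + u ^ 2) / 4) * y ^ 2)) = (1 + u ^ 2)⁻¹ *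
        (gd μ σ y * exp (-(c * (1 + u ^ 2) / 4) * y ^ 2) +
          gd μ σ (-y) * exp (-(c * (1 + u ^ 2) / 4) * (-y) ^ 2)) := by
      intro y; rw [neg_sq]; ring
    simp only [e]
    rw [integral_const_mul, integral_fold _ (gd_mul_integrable μ σ _ hσ hb),
      gd_mul_integral μ σ _ hσ hb]
    have hd : 0 < 1 + 2 * σ ^ 2 * (c * (1 + u ^ 2) / 4) := by positivity
    congr 3
    · field_simp
      ring
    · field_simp
  · have hH : Integrable (fun y => gd μ σ y + gd μ σ (-y)) := hG.add hG.comp_neg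
    refine ((hH.integrableOn (s := Set.Ioi 0)).mul_prod
      (integrable_inv_one_add_sq.integrableOn (s := Set.Ioi 0))).mono' ?_ ?_
    · apply Measurable.aestronglyMeasurable
      unfold Function.uncurry gd
      fun_prop
    · refine Filter.Eventually.of_forall fun z => ?_
      have hg : ∀ y, 0 ≤ gd μ σ y := fun y => by unfold gd; positivity
      have h1 := hg z.1
      have h2 := hg (-z.1)
      simp only [Function.uncurry]
      rw [norm_of_nonneg (by positivity)]
      gcongr
      refine mul_le_of_le_one_right (by positivity) (exp_le_one_iff.2 ?_)
      have : 0 ≤ (c * (1 + z.2 ^ 2) / 4) * z.1 ^ 2 := by positivity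
      linarith
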